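/- Let D ≥ 2 be an integer and let G be a finite simple 2-degenerate graph satisfying: (A1) the maximum degree of G is at most D + 2, and (A2) for each t ∈ {1, 2}, every vertex v with d_G(v) = D + t is adjacent to at least t vertices of degree 1. Then χ'_s(G) ≤ 5D + 1. -/

import Mathlib

open scoped Classical

namespace StrongEC

/-- Two edges of `G` conflict for strong edge-coloring: they are distinct and either share
an endpoint or are both adjacent to a common edge of `G`. -/
def Conflict {V : Type*} (G : SimpleGraph V) (e e' : Sym2 V) : Prop :=
  e ≠ e' ∧ ((∃ v, v ∈ e ∧ v ∈ e') ∨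
    ∃ f ∈ G.edgeSet, (∃ v, v ∈ e ∧ v ∈ f) ∧ (∃ w, w ∈ e' ∧ w ∈ f))

/-- `C` is a strong edge-coloring of `G` with `k` colors. -/
def IsStrongColoring {V : Type*} (G : SimpleGraph V) {k : ℕ} (C : Sym2 V → Fin k) : Prop :=
  ∀ e ∈ G.edgeSet, ∀ e' ∈ G.edgeSet, Conflict G e e' → C e ≠ C e'

/-- `G` admits a strong `k`-edge-coloring. -/
def HasStrongColoring {V : Type*} (G : SimpleGraph V) (k : ℕ) : Prop :=
  ∃ C : Sym2 V → Fin k, IsStrongColoring G C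

/-- The strong chromatic index of `G`: the least `k` such that `G` admits a strong
`k`-edge-coloring. -/
noncomputable def strongChromaticIndex {V : Type*} (G : SimpleGraph V) : ℕ :=
  sInf {k | HasStrongColoring G k}

/-- `G` is 2-degenerate: every induced subgraph on a nonempty vertex set has a vertex of
degree at most 2 in it. -/
def TwoDegenerate {V : Type*} (G : SimpleGraph V) : Prop :=
  ∀ A : Finset V, A.Nonempty → ∃ v ∈ A, (G.neighborSet v ∩ ↑A).ncard ≤ 2

set_option linter.unusedSectionVars false
set_option linter.unusedVariables false

section Aux

variable {V : Type*} [Fintype V]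

/-- closeness of slots -/
def Near (K : SimpleGraph V) (e e' : Sym2 V) : Prop :=
  ∃ a ∈ e, ∃ b ∈ e', a = b ∨ K.Adj a b

theorem Near.symm {K : SimpleGraph V} {e e' : Sym2 V} (h : Near K e e') : Near K e' e := by
  obtain ⟨a, ha, b, hb, h⟩ := h
  exact ⟨b, hb, a, ha, h.imp Eq.symm SimpleGraph.Adj.symm⟩

/-- weights of slots: edges have weight one, the loop at `a` has weight `D + 2 - deg a`. -/
noncomputable def wt (K : SimpleGraph V) (D : ℕ) (e : Sym2 V) : ℕ :=
  if e ∈ K.edgeSet then 1 else ∑ a : V, if e = s(a, a) then D + 2 - K.degree a else 0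

theorem wt_adj {K : SimpleGraph V} {D : ℕ} {a b : V} (h : K.Adj a b) : wt K D s(a, b) = 1 := by
  simp [wt, h]

theorem wt_loop (K : SimpleGraph V) (D : ℕ) (a : V) : wt K D s(a, a) = D + 2 - K.degree a := by
  simp [wt]

theorem wt_non {K : SimpleGraph V} {D : ℕ} {a b : V} (hab : a ≠ b) (h : ¬ K.Adj a b) :
    wt K D s(a, b) = 0 := by
  simp only [wt, SimpleGraph.mem_edgeSet, h, if_false]
  apply Finset.sum_eq_zero
  intro c _
  rw [if_neg]
  intro h
  simp at h
  exact hab (h.1.trans h.2.symm)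

/-- partial assignment, with `Z` the set of uncoloured slots -/
def Part (K : SimpleGraph V) (D : ℕ) {k : ℕ} (F : Sym2 V → Finset (Fin k))
    (Z : Finset (Sym2 V)) : Prop :=
  (∀ e e', e ≠ e' → Near K e e' → Disjoint (F e) (F e')) ∧
  ∀ e, (F e).card = if e ∈ Z then 0 else wt K D e

theorem Part.empty {K : SimpleGraph V} {D k : ℕ} {F : Sym2 V → Finset (Fin k)}
    {Z : Finset (Sym2 V)} (h : Part K D F Z) {e : Sym2 V} (he : e ∈ Z) : F e = ∅ := by
  have := h.2 e
  rw [if_pos he] at this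
  exact Finset.card_eq_zero.1 this

theorem Part.non {K : SimpleGraph V} {D k : ℕ} {F : Sym2 V → Finset (Fin k)}
    {Z : Finset (Sym2 V)} (h : Part K D F Z) {a b : V} (hab : a ≠ b) (hn : ¬ K.Adj a b) :
    F s(a, b) = ∅ := by
  have := h.2 s(a, b)
  rw [wt_non hab hn] at this
  simpa using this

theorem Part.le {K : SimpleGraph V} {D k : ℕ} {F : Sym2 V → Finset (Fin k)}
    {Z : Finset (Sym2 V)} (h : Part K D F Z) (e : Sym2 V) : (F e).card ≤ wt K D e := by
  rw [h.2 e]; split_ifs <;> simp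

theorem Part.edge_le {K : SimpleGraph V} {D k : ℕ} {F : Sym2 V → Finset (Fin k)}
    {Z : Finset (Sym2 V)} (h : Part K D F Z) {a b : V} (hab : a ≠ b) : (F s(a, b)).card ≤ 1 := by
  by_cases h1 : K.Adj a b
  · exact (h.le _).trans (wt_adj h1).le
  · simp [h.non hab h1]

/-- greedy step -/
theorem Part.step {K : SimpleGraph V} {D k : ℕ} {F : Sym2 V → Finset (Fin k)}
    {Z : Finset (Sym2 V)} {e : Sym2 V} (h : Part K D F (insert e Z)) (B : Finset (Fin k))
    (hB : ∀ e', e' ≠ e → Near K e e' → F e' ⊆ B) (hc : B.card + wt K D e ≤ k) :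
    ∃ F' : Sym2 V → Finset (Fin k), Part K D F' Z := by
  by_cases heZ : e ∈ Z
  · rw [Finset.insert_eq_of_mem heZ] at h
    exact ⟨F, h⟩
  have : wt K D e ≤ (Bᶜ).card := by
    rw [Finset.card_compl, Fintype.card_fin]; omega
  obtain ⟨s, hs, hsc⟩ := Finset.exists_subset_card_eq this
  have hd : ∀ e', e' ≠ e → Near K e e' → Disjoint s (F e') := by
    intro e' h1 h2
    rw [Finset.disjoint_left]
    intro c hc1 hc2
    exact (Finset.mem_compl.1 (hs hc1)) (hB e' h1 h2 hc2)
  refine ⟨Function.update F e s, ?_, ?_⟩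
  · intro e1 e2 hne hn
    by_cases h1 : e1 = e
    · subst h1
      rw [Function.update_self, Function.update_of_ne hne.symm]
      exact hd _ hne.symm hn
    · by_cases h2 : e2 = e
      · subst h2
        rw [Function.update_self, Function.update_of_ne hne]
        exact (hd _ hne hn.symm).symm
      · rw [Function.update_of_ne h1, Function.update_of_ne h2]
        exact h.1 _ _ hne hn
  · intro e'
    by_cases h1 : e' = e
    · subst h1
      simp [heZ, hsc]
    · rw [Function.update_of_ne h1, h.2]
      simp [h1]

/-- colours seen at `b` -/
noncomputable def Q (K : SimpleGraph V) {k : ℕ} (F : Sym2 V → Finset (Fin k)) (b : V) :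
    Finset (Fin k) :=
  F s(b, b) ∪ (K.neighborFinset b).biUnion (fun c => F s(b, c))

/-- colours seen at `b`, apart from the edge to `v` -/
noncomputable def Q' (K : SimpleGraph V) {k : ℕ} (F : Sym2 V → Finset (Fin k)) (v b : V) :
    Finset (Fin k) :=
  F s(b, b) ∪ ((K.neighborFinset b).erase v).biUnion (fun c => F s(b, c))

theorem Part.Q_card {K : SimpleGraph V} {D k : ℕ} {F : Sym2 V → Finset (Fin k)}
    {Z : Finset (Sym2 V)} (h : Part K D F Z) (hD : ∀ v, K.degree v ≤ D) (b : V) :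
    (Q K F b).card ≤ D + 2 := by
  have h1 := h.le s(b, b)
  rw [wt_loop] at h1
  have h2 : ((K.neighborFinset b).biUnion (fun c => F s(b, c))).card ≤
      (K.neighborFinset b).card * 1 := by
    apply Finset.card_biUnion_le_card_mul
    intro c hc
    exact h.edge_le (by rintro rfl; simp at hc)
  rw [SimpleGraph.card_neighborFinset_eq_degree] at h2
  have h3 := Finset.card_union_le (F s(b, b)) ((K.neighborFinset b).biUnion (fun c => F s(b, c)))
  have := hD b
  unfold Q
  omega

theorem Part.Q'_card {K : SimpleGraph V} {D k : ℕ} {F : Sym2 V → Finset (Fin k)}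
    {Z : Finset (Sym2 V)} (h : Part K D F Z) (hD : ∀ v, K.degree v ≤ D) {v b : V}
    (hvb : K.Adj v b) :
    (Q' K F v b).card ≤ D + 1 := by
  have h1 := h.le s(b, b)
  rw [wt_loop] at h1
  have h2 : (((K.neighborFinset b).erase v).biUnion (fun c => F s(b, c))).card ≤
      ((K.neighborFinset b).erase v).card * 1 := by
    apply Finset.card_biUnion_le_card_mul
    intro c hc
    exact h.edge_le (by rintro rfl; simp at hc)
  have h4 : v ∈ K.neighborFinset b := by simpa using hvb.symm
  have h5 := Finset.card_pos.2 ⟨v, h4⟩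
  rw [Finset.card_erase_of_mem h4] at h2
  rw [SimpleGraph.card_neighborFinset_eq_degree] at h2 h5
  have h3 := Finset.card_union_le (F s(b, b))
    (((K.neighborFinset b).erase v).biUnion (fun c => F s(b, c)))
  have := hD b
  unfold Q'
  omega

theorem Part.mem_Q {K : SimpleGraph V} {D k : ℕ} {F : Sym2 V → Finset (Fin k)}
    {Z : Finset (Sym2 V)} (h : Part K D F Z) {b c : V} : F s(b, c) ⊆ Q K F b := by
  intro x hx
  unfold Q
  by_cases hbc : b = c
  · subst hbc; exact Finset.mem_union_left _ hx
  · by_cases ha : K.Adj b c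
    · exact Finset.mem_union_right _ (Finset.mem_biUnion.2 ⟨c, by simpa using ha, hx⟩)
    · rw [h.non hbc ha] at hx; simp at hx

theorem Part.mem_Q' {K : SimpleGraph V} {D k : ℕ} {F : Sym2 V → Finset (Fin k)}
    {Z : Finset (Sym2 V)} (h : Part K D F Z) {v b c : V} (hcv : c ≠ v) :
    F s(b, c) ⊆ Q' K F v b := by
  intro x hx
  unfold Q'
  by_cases hbc : b = c
  · subst hbc; exact Finset.mem_union_left _ hx
  · by_cases ha : K.Adj b c
    · exact Finset.mem_union_right _ (Finset.mem_biUnion.2 ⟨c, by simp [ha, hcv], hx⟩)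
    · rw [h.non hbc ha] at hx; simp at hx

/-- small neighbours -/
noncomputable def Sm (K : SimpleGraph V) (v : V) : Finset V :=
  (K.neighborFinset v).filter (fun u => K.degree u ≤ 2)

/-- big neighbours -/
noncomputable def Bg (K : SimpleGraph V) (v : V) : Finset V :=
  (K.neighborFinset v).filter (fun u => ¬ K.degree u ≤ 2)

theorem sm_add_bg (K : SimpleGraph V) (v : V) :
    (Sm K v).card + (Bg K v).card = K.degree v := by
  unfold Sm Bg
  rw [Finset.card_filter_add_card_filter_not]
  simp

theorem mem_Sm {K : SimpleGraph V} {u v : V} : u ∈ Sm K v ↔ K.Adj v u ∧ K.degree u ≤ 2 := by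
  simp [Sm]

theorem mem_Bg {K : SimpleGraph V} {u v : V} : u ∈ Bg K v ↔ K.Adj v u ∧ ¬ K.degree u ≤ 2 := by
  simp [Bg]

/-- loops at small neighbours -/
noncomputable def Z1 (K : SimpleGraph V) (v : V) (T : Finset V) : Finset (Sym2 V) :=
  T.image (fun u => s(u, u))

theorem card_erase_nbr {K : SimpleGraph V} {u v : V} (h : K.Adj v u) :
    ((K.neighborFinset u).erase v).card + 1 = K.degree u := by
  rw [← SimpleGraph.card_neighborFinset_eq_degree]
  exact Finset.card_erase_add_one (by simpa using h.symm)

/-- colour the edges from `v` to small neighbours -/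
theorem stage2 {K : SimpleGraph V} {D : ℕ} (hD : ∀ v, K.degree v ≤ D) {v : V}
    (hr : (Bg K v).card ≤ 2) (T : Finset V) (hT : T ⊆ Sm K v) :
    ∀ F : Sym2 V → Finset (Fin (5 * D + 1)),
    Part K D F (T.image (fun u => s(v, u)) ∪ insert s(v, v) (Z1 K v (Sm K v))) →
    ∃ F' : Sym2 V → Finset (Fin (5 * D + 1)), Part K D F' (insert s(v, v) (Z1 K v (Sm K v))) := by
  induction T using Finset.induction_on with
  | empty => intro F hF; exact ⟨F, by simpa using hF⟩
  | insert u T huT ih =>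
    intro F hF
    rw [Finset.image_insert, Finset.insert_union] at hF
    have hu : u ∈ Sm K v := hT (Finset.mem_insert_self _ _)
    obtain ⟨hvu, hdu⟩ := mem_Sm.1 hu
    have hvv : F s(v, v) = ∅ := hF.empty (by simp)
    have hss : ∀ b ∈ Sm K v, F s(b, b) = ∅ := fun b hb => hF.empty (by
      apply Finset.mem_insert_of_mem
      apply Finset.mem_union_right
      apply Finset.mem_insert_of_mem
      exact Finset.mem_image_of_mem _ hb)
    set B1 := ((K.neighborFinset v).erase u).biUnion (fun c => F s(v, c)) with hB1
    set B2 := (Bg K v).biUnion (fun b => Q' K F v b) with hB2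
    set B3 := ((Sm K v).erase u).biUnion
      (fun b => ((K.neighborFinset b).erase v).biUnion (fun c => F s(b, c))) with hB3
    set B4 := ((K.neighborFinset u).erase v).biUnion (fun b => Q K F b) with hB4
    have c1 : B1.card ≤ ((K.neighborFinset v).erase u).card * 1 := by
      apply Finset.card_biUnion_le_card_mul
      intro c hc
      exact hF.edge_le (by rintro rfl; simp at hc)
    have c2 : B2.card ≤ (Bg K v).card * (D + 1) := by
      apply Finset.card_biUnion_le_card_mul
      intro c hc
      exact hF.Q'_card hD (mem_Bg.1 hc).1
    have c3 : B3.card ≤ ((Sm K v).erase u).card * 1 := by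
      apply Finset.card_biUnion_le_card_mul
      intro b hb
      obtain ⟨hb1, hb2⟩ := mem_Sm.1 (Finset.mem_of_mem_erase hb)
      have h1 : (((K.neighborFinset b).erase v).biUnion (fun c => F s(b, c))).card ≤
          ((K.neighborFinset b).erase v).card * 1 := by
        apply Finset.card_biUnion_le_card_mul
        intro c hc
        exact hF.edge_le (by rintro rfl; simp at hc)
      have := card_erase_nbr hb1
      omega
    have c4 : B4.card ≤ ((K.neighborFinset u).erase v).card * (D + 2) := by
      apply Finset.card_biUnion_le_card_mul
      intro c hc
      exact hF.Q_card hD c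
    have e1 := card_erase_nbr hvu.symm
    have e3 := Finset.card_erase_add_one hu
    have e4 := card_erase_nbr hvu
    have e5 := sm_add_bg K v
    have e6 := hD v
    have hsub : ∀ b c, b ∈ s(v, u) ∨ K.Adj v b ∨ K.Adj u b → s(b, c) ≠ s(v, u) →
        F s(b, c) ⊆ B1 ∪ B2 ∪ B3 ∪ B4 := by
      intro b c hb hne x hx
      have hadj : b = c ∨ K.Adj b c := by
        by_contra hcon
        push Not at hcon
        rw [hF.non hcon.1 hcon.2] at hx
        simp at hx
      simp only [Finset.mem_union]
      have hv : ∀ c, F s(v, c) ⊆ F s(v, c) → s(v, c) ≠ s(v, u) → x ∈ F s(v, c) → x ∈ B1 := by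
        intro c _ hne hx
        have hcv : v ≠ c := by rintro rfl; rw [hvv] at hx; simp at hx
        have : K.Adj v c := by
          by_contra hcon
          rw [hF.non hcv hcon] at hx
          simp at hx
        refine Finset.mem_biUnion.2 ⟨c, ?_, hx⟩
        simp only [Finset.mem_erase, SimpleGraph.mem_neighborFinset]
        exact ⟨by rintro rfl; exact hne rfl, this⟩
      by_cases hbv : b = v
      · subst hbv
        exact Or.inl (Or.inl (Or.inl (hv c subset_rfl hne hx)))
      by_cases hcv : c = v
      · subst hcv
        rw [Sym2.eq_swap] at hx hne
        exact Or.inl (Or.inl (Or.inl (hv b subset_rfl hne hx)))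
      by_cases hbu : b = u
      · subst hbu
        have hcb : b ≠ c := by rintro rfl; rw [hss _ hu] at hx; simp at hx
        have := hadj.resolve_left hcb
        right
        refine Finset.mem_biUnion.2 ⟨c, by simp [hcv, this], ?_⟩
        rw [Sym2.eq_swap] at hx
        exact hF.mem_Q hx
      by_cases hub : K.Adj u b
      · right
        exact Finset.mem_biUnion.2 ⟨b, by simp [hbv, hub], hF.mem_Q hx⟩
      have hvb : K.Adj v b := by
        rcases hb with hb | hb | hb
        · simp [hbv, hbu] at hb
        · exact hb
        · exact absurd hb hub
      left
      by_cases hdb : K.degree b ≤ 2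
      · have hbS := mem_Sm.2 ⟨hvb, hdb⟩
        have hcb : b ≠ c := by rintro rfl; rw [hss _ hbS] at hx; simp at hx
        have := hadj.resolve_left hcb
        right
        refine Finset.mem_biUnion.2 ⟨b, by simp [hbu, hbS], ?_⟩
        exact Finset.mem_biUnion.2 ⟨c, by simp [hcv, this], hx⟩
      · left; right
        exact Finset.mem_biUnion.2 ⟨b, mem_Bg.2 ⟨hvb, hdb⟩, hF.mem_Q' hcv hx⟩
    obtain ⟨F', hF'⟩ := hF.step (B1 ∪ B2 ∪ B3 ∪ B4) (by
      rintro e' hne ⟨a, ha, b, hb, hab⟩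
      obtain ⟨c, rfl⟩ := Sym2.mem_iff_exists.1 hb
      apply hsub _ _ _ hne
      rcases hab with rfl | hab
      · exact Or.inl ha
      · rcases Sym2.mem_iff.1 ha with rfl | rfl
        · exact Or.inr (Or.inl hab)
        · exact Or.inr (Or.inr hab)) (by
      rw [wt_adj hvu]
      have u1 := Finset.card_union_le (B1 ∪ B2 ∪ B3) B4
      have u2 := Finset.card_union_le (B1 ∪ B2) B3
      have u3 := Finset.card_union_le B1 B2
      have c4' : B4.card ≤ 1 * (D + 2) := c4.trans (Nat.mul_le_mul_right _ (by omega))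
      generalize (Bg K v).card = r at *
      interval_cases r <;> omega)
    exact ih (fun x hx => hT (Finset.mem_insert_of_mem hx)) F' hF'

/-- colour the loop at `v` -/
theorem stage3 {K : SimpleGraph V} {D : ℕ} (h2D : 2 ≤ D) (hD : ∀ v, K.degree v ≤ D) {v : V}
    (hr : (Bg K v).card ≤ 2) 
    (F : Sym2 V → Finset (Fin (5 * D + 1)))
    (hF : Part K D F (insert s(v, v) (Z1 K v (Sm K v)))) :
    ∃ F' : Sym2 V → Finset (Fin (5 * D + 1)), Part K D F' (Z1 K v (Sm K v)) := by
  have hss : ∀ b ∈ Sm K v, F s(b, b) = ∅ := fun b hb => hF.empty (by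
      apply Finset.mem_insert_of_mem
      exact Finset.mem_image_of_mem _ hb)
  set B1 := (K.neighborFinset v).biUnion (fun c => F s(v, c)) with hB1
  set B2 := (Bg K v).biUnion (fun b => Q' K F v b) with hB2
  set B3 := (Sm K v).biUnion
      (fun b => ((K.neighborFinset b).erase v).biUnion (fun c => F s(b, c))) with hB3
  have c1 : B1.card ≤ (K.neighborFinset v).card * 1 := by
      apply Finset.card_biUnion_le_card_mul
      intro c hc
      exact hF.edge_le (by rintro rfl; simp at hc)
  have c2 : B2.card ≤ (Bg K v).card * (D + 1) := by
      apply Finset.card_biUnion_le_card_mul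
      intro c hc
      exact hF.Q'_card hD (mem_Bg.1 hc).1
  have c3 : B3.card ≤ (Sm K v).card * 1 := by
      apply Finset.card_biUnion_le_card_mul
      intro b hb
      obtain ⟨hb1, hb2⟩ := mem_Sm.1 hb
      have h1 : (((K.neighborFinset b).erase v).biUnion (fun c => F s(b, c))).card ≤
          ((K.neighborFinset b).erase v).card * 1 := by
        apply Finset.card_biUnion_le_card_mul
        intro c hc
        exact hF.edge_le (by rintro rfl; simp at hc)
      have := card_erase_nbr hb1
      omega
  have e5 := sm_add_bg K v
  have e6 := hD v
  rw [SimpleGraph.card_neighborFinset_eq_degree] at c1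
  refine hF.step (B1 ∪ B2 ∪ B3) ?_ ?_
  · rintro e' hne ⟨a, ha, b, hb, hab⟩ x hx
    obtain ⟨c, rfl⟩ := Sym2.mem_iff_exists.1 hb
    have ha : a = v := by simpa using ha
    subst ha
    have hadj : b = c ∨ K.Adj b c := by
      by_contra hcon
      push Not at hcon
      rw [hF.non hcon.1 hcon.2] at hx
      simp at hx
    simp only [Finset.mem_union]
    by_cases hbv : b = a
    · subst hbv
      have : K.Adj b c := hadj.resolve_left (by rintro rfl; exact hne rfl)
      left; left
      exact Finset.mem_biUnion.2 ⟨c, by simpa using this, hx⟩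
    have hab : K.Adj a b := hab.resolve_left (Ne.symm hbv)
    by_cases hcv : c = a
    · subst hcv
      left; left
      rw [Sym2.eq_swap] at hx
      exact Finset.mem_biUnion.2 ⟨b, by simpa using hab, hx⟩
    by_cases hdb : K.degree b ≤ 2
    · have hbS := mem_Sm.2 ⟨hab, hdb⟩
      have hcb : b ≠ c := by rintro rfl; rw [hss _ hbS] at hx; simp at hx
      have := hadj.resolve_left hcb
      right
      refine Finset.mem_biUnion.2 ⟨b, hbS, ?_⟩
      exact Finset.mem_biUnion.2 ⟨c, by simp [hcv, this], hx⟩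
    · left; right
      exact Finset.mem_biUnion.2 ⟨b, mem_Bg.2 ⟨hab, hdb⟩, hF.mem_Q' hcv hx⟩
  · rw [wt_loop]
    have u2 := Finset.card_union_le (B1 ∪ B2) B3
    have u3 := Finset.card_union_le B1 B2
    generalize (Bg K v).card = r at *
    interval_cases r <;> omega

/-- colour the loops at small neighbours -/
theorem stage4 {K : SimpleGraph V} {D : ℕ} (h2D : 2 ≤ D) (hD : ∀ v, K.degree v ≤ D) {v : V}
    (T : Finset V) (hT : T ⊆ Sm K v) :
    ∀ F : Sym2 V → Finset (Fin (5 * D + 1)),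
    Part K D F (Z1 K v T) →
    ∃ F' : Sym2 V → Finset (Fin (5 * D + 1)), Part K D F' ∅ := by
  induction T using Finset.induction_on with
  | empty => intro F hF; exact ⟨F, by simpa [Z1] using hF⟩
  | insert u T huT ih =>
    intro F hF
    have hu : u ∈ Sm K v := hT (Finset.mem_insert_self _ _)
    obtain ⟨hvu, hdu⟩ := mem_Sm.1 hu
    have hF : Part K D F (insert s(u, u) (Z1 K v T)) := by
      rw [Z1, Finset.image_insert] at hF; exact hF
    set B := (K.neighborFinset u).biUnion (fun b => Q K F b) with hB
    have c1 : B.card ≤ (K.neighborFinset u).card * (D + 2) := by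
      apply Finset.card_biUnion_le_card_mul
      intro c hc
      exact hF.Q_card hD c
    rw [SimpleGraph.card_neighborFinset_eq_degree] at c1
    obtain ⟨F', hF'⟩ := hF.step B (by
      rintro e' hne ⟨a, ha, b, hb, hab⟩ x hx
      obtain ⟨c, rfl⟩ := Sym2.mem_iff_exists.1 hb
      have ha : a = u := by simpa using ha
      subst ha
      have hadj : b = c ∨ K.Adj b c := by
        by_contra hcon
        push Not at hcon
        rw [hF.non hcon.1 hcon.2] at hx
        simp at hx
      by_cases hbv : b = a
      · subst hbv
        have : K.Adj b c := hadj.resolve_left (by rintro rfl; exact hne rfl)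
        rw [Sym2.eq_swap] at hx
        exact Finset.mem_biUnion.2 ⟨c, by simpa using this, hF.mem_Q hx⟩
      have hab : K.Adj a b := hab.resolve_left (Ne.symm hbv)
      exact Finset.mem_biUnion.2 ⟨b, by simpa using hab, hF.mem_Q hx⟩) (by
      rw [wt_loop]
      generalize K.degree u = r at *
      interval_cases r <;> omega)
    exact ih (fun x hx => hT (Finset.mem_insert_of_mem hx)) F' hF'

/-- delete all edges at `u` -/
def delV (K : SimpleGraph V) (u : V) : SimpleGraph V where
  Adj a b := K.Adj a b ∧ a ≠ u ∧ b ≠ u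
  symm := ⟨fun _ _ h => ⟨h.1.symm, h.2.2, h.2.1⟩⟩
  loopless := ⟨fun _ h => h.1.ne rfl⟩

theorem delV_adj {K : SimpleGraph V} {u a b : V} :
    (delV K u).Adj a b ↔ K.Adj a b ∧ a ≠ u ∧ b ≠ u := Iff.rfl

theorem delV_nbr (K : SimpleGraph V) {u a : V} (h : a ≠ u) :
    (delV K u).neighborFinset a = (K.neighborFinset a).erase u := by
  ext b
  simp only [SimpleGraph.mem_neighborFinset, delV_adj, Finset.mem_erase]
  tauto

theorem delV_deg_adj {K : SimpleGraph V} {u a : V} (h : K.Adj u a) :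
    (delV K u).degree a + 1 = K.degree a := by
  rw [← card_erase_nbr h, ← delV_nbr K h.ne', SimpleGraph.card_neighborFinset_eq_degree]

theorem delV_deg_non {K : SimpleGraph V} {u a : V} (h : a ≠ u) (hn : ¬ K.Adj u a) :
    (delV K u).degree a = K.degree a := by
  rw [← SimpleGraph.card_neighborFinset_eq_degree, delV_nbr K h, Finset.erase_eq_of_notMem,
    SimpleGraph.card_neighborFinset_eq_degree]
  simpa using fun h => hn h.symm

/-- the slots to be recoloured -/
noncomputable def ZZ (K : SimpleGraph V) (v : V) : Finset (Sym2 V) :=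
  (Sm K v).image (fun u => s(v, u)) ∪ insert s(v, v) (Z1 K v (Sm K v))

theorem ZZ_edge {K : SimpleGraph V} {v u : V} (h : u ∈ Sm K v) : s(v, u) ∈ ZZ K v :=
  Finset.mem_union_left _ (Finset.mem_image_of_mem _ h)

theorem ZZ_self (K : SimpleGraph V) (v : V) : s(v, v) ∈ ZZ K v :=
  Finset.mem_union_right _ (Finset.mem_insert_self _ _)

theorem ZZ_loop {K : SimpleGraph V} {v u : V} (h : u ∈ Sm K v) : s(u, u) ∈ ZZ K v :=
  Finset.mem_union_right _ (Finset.mem_insert_of_mem (Finset.mem_image_of_mem _ h))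

theorem ZZ_not {K : SimpleGraph V} {v a b : V} (hab : a ≠ b) (ha : a ≠ v) (hb : b ≠ v) :
    s(a, b) ∉ ZZ K v := by
  simp only [ZZ, Z1, Finset.mem_union, Finset.mem_insert, Finset.mem_image, not_or, not_exists,
    not_and]
  refine ⟨?_, ?_, ?_⟩
  · intro c _ h
    rcases Sym2.eq_iff.1 h with h | h
    · exact ha h.1.symm
    · exact hb h.1.symm
  · intro h
    rcases Sym2.eq_iff.1 h with h | h
    · exact ha h.1
    · exact ha h.1
  · intro c _ h
    rcases Sym2.eq_iff.1 h with h | h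
    · exact hab (h.1.symm.trans h.2)
    · exact hab (h.2.symm.trans h.1)

theorem stage1A {K : SimpleGraph V} {D : ℕ} {v u : V}
    (hu : u ∈ Sm K v) (hX : ∀ x, K.Adj u x → x = v)
    (F' : Sym2 V → Finset (Fin (5 * D + 1))) (hF' : Part (delV K u) D F' ∅) :
    ∃ F : Sym2 V → Finset (Fin (5 * D + 1)), Part K D F (ZZ K v) := by
  refine ⟨fun e => if e ∈ ZZ K v then ∅ else F' e, ?_, ?_⟩
  · have hemp : ∀ e, u ∈ e → (if e ∈ ZZ K v then ∅ else F' e) = ∅ := by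
      intro e he
      obtain ⟨c, rfl⟩ := Sym2.mem_iff_exists.1 he
      split_ifs with h
      · rfl
      · apply hF'.non
        · rintro rfl; exact h (ZZ_loop hu)
        · exact fun h => h.2.1 rfl
    have hsub : ∀ e, (if e ∈ ZZ K v then ∅ else F' e) ⊆ F' e := by
      intro e; split_ifs <;> simp
    rintro e e' hne ⟨a, ha, b, hb, hab⟩
    by_cases hau : a = u
    · subst hau; simp only [hemp e ha]; simp
    by_cases hbu : b = u
    · subst hbu; simp only [hemp e' hb]; simp
    exact (hF'.1 e e' hne ⟨a, ha, b, hb, hab.imp id fun h => ⟨h, hau, hbu⟩⟩).mono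
      (hsub e) (hsub e')
  · intro e
    by_cases he : e ∈ ZZ K v
    · simp [he]
    simp only [he, if_false]
    rw [hF'.2]
    simp only [Finset.notMem_empty, if_false]
    induction e using Sym2.ind with
    | _ a b =>
    by_cases hab : a = b
    · subst hab
      rw [wt_loop, wt_loop, delV_deg_non]
      · rintro rfl; exact he (ZZ_loop hu)
      · intro h; rw [hX a h] at he; exact he (ZZ_self _ _)
    · by_cases hadj : K.Adj a b
      · have ha : a ≠ u := by
          rintro rfl
          rw [hX b hadj, Sym2.eq_swap] at he; exact he (ZZ_edge hu)
        have hb : b ≠ u := by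
          rintro rfl
          rw [hX a hadj.symm] at he; exact he (ZZ_edge hu)
        rw [wt_adj hadj, wt_adj]
        exact ⟨hadj, ha, hb⟩
      · rw [wt_non hab hadj, wt_non hab]
        exact fun h => hadj h.1

theorem stage1B {K : SimpleGraph V} {D : ℕ} (hD : ∀ v, K.degree v ≤ D) {v u x : V}
    (hr : (Bg K v).card ≤ 2)
    (hu : u ∈ Sm K v) (hux : K.Adj u x) (hxv : x ≠ v) (hX : ∀ y, K.Adj u y → y = v ∨ y = x)
    (F' : Sym2 V → Finset (Fin (5 * D + 1))) (hF' : Part (delV K u) D F' ∅) :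
    ∃ F : Sym2 V → Finset (Fin (5 * D + 1)), Part K D F (ZZ K v) := by
  have huv : u ≠ v := (mem_Sm.1 hu).1.ne'
  have hxu : x ≠ u := hux.ne'
  have hPx : 3 ≤ (F' s(x, x)).card := by
    rw [hF'.2]
    simp only [Finset.notMem_empty, if_false]
    rw [wt_loop]
    have h1 := delV_deg_adj hux
    have h2 := hD x
    omega
  have hY : ((Bg K v).biUnion (fun y => F' s(v, y))).card ≤ (Bg K v).card * 1 := by
    apply Finset.card_biUnion_le_card_mul
    intro c hc
    exact hF'.edge_le (mem_Bg.1 hc).1.ne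
  obtain ⟨γ, hγ1, hγ2⟩ := Finset.exists_mem_notMem_of_card_lt_card
    (show ((Bg K v).biUnion (fun y => F' s(v, y))).card < (F' s(x, x)).card by omega)
  set F : Sym2 V → Finset (Fin (5 * D + 1)) := fun e => if e ∈ ZZ K v then ∅ else
    if e = s(u, x) then {γ} else if e = s(x, x) then (F' e).erase γ else F' e with hFdef
  have hsub : ∀ e, e ≠ s(u, x) → F e ⊆ F' e := by
    intro e he
    simp only [hFdef, he, if_false]
    split_ifs
    · simp
    · exact Finset.erase_subset _ _
    · simp
  have hFux : F s(u, x) = {γ} := by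
    simp only [hFdef]
    rw [if_neg (ZZ_not hxu.symm huv hxv)]
    simp
  have hFZ : ∀ e ∈ ZZ K v, F e = ∅ := by
    intro e he; simp only [hFdef]; rw [if_pos he]
  have hemp : ∀ e, u ∈ e → e ≠ s(u, x) → F e = ∅ := by
    intro e he hne
    obtain ⟨c, rfl⟩ := Sym2.mem_iff_exists.1 he
    by_cases hc : u = c
    · subst hc; exact hFZ _ (ZZ_loop hu)
    · apply Finset.subset_empty.1
      rw [← hF'.non hc (fun h => h.2.1 rfl)]
      exact hsub _ hne
  have hloop : ∀ e', Near (delV K u) s(x, x) e' → e' ≠ s(u, x) → γ ∉ F e' := by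
    intro e' hn hne hg
    by_cases h : e' = s(x, x)
    · subst h
      simp only [hFdef] at hg
      split_ifs at hg
      · simp at hg
      · simp at hg
    · exact Finset.disjoint_left.1 (hF'.1 _ _ (Ne.symm h) hn) hγ1 (hsub _ hne hg)
  have hclaim : ∀ e', e' ≠ s(u, x) → Near K s(u, x) e' → γ ∉ F e' := by
    rintro e' hne ⟨a, ha, b, hb, hab⟩ hg
    by_cases hbu : b = u
    · subst hbu; rw [hemp e' hb hne] at hg; simp at hg
    by_cases hbx : b = x
    · subst hbx
      exact hloop e' ⟨b, by simp, b, hb, Or.inl rfl⟩ hne hg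
    rcases Sym2.mem_iff.1 ha with rfl | rfl
    · have h1 := hab.resolve_left (Ne.symm hbu)
      have hbv := (hX b h1).resolve_right hbx
      subst hbv
      obtain ⟨c, rfl⟩ := Sym2.mem_iff_exists.1 hb
      by_cases hcb : b = c
      · subst hcb; rw [hFZ _ (ZZ_self _ _)] at hg; simp at hg
      by_cases hadj : K.Adj b c
      · by_cases hdc : K.degree c ≤ 2
        · rw [hFZ _ (ZZ_edge (mem_Sm.2 ⟨hadj, hdc⟩))] at hg; simp at hg
        · exact hγ2 (Finset.mem_biUnion.2 ⟨c, mem_Bg.2 ⟨hadj, hdc⟩, hsub _ hne hg⟩)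
      · have := hsub _ hne hg
        rw [hF'.non hcb (fun h => hadj h.1)] at this
        simp at this
    · have h1 := hab.resolve_left (Ne.symm hbx)
      exact hloop e' ⟨a, by simp, b, hb, Or.inr ⟨h1, hxu, hbu⟩⟩ hne hg
  refine ⟨F, ?_, ?_⟩
  · rintro e e' hne hn
    by_cases h1 : e = s(u, x)
    · subst h1
      rw [hFux, Finset.disjoint_singleton_left]
      exact hclaim e' hne.symm hn
    by_cases h2 : e' = s(u, x)
    · subst h2
      rw [hFux, Finset.disjoint_singleton_right]
      exact hclaim e hne hn.symm
    obtain ⟨a, ha, b, hb, hab⟩ := hn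
    by_cases hau : a = u
    · subst hau; rw [hemp e ha h1]; simp
    by_cases hbu : b = u
    · subst hbu; rw [hemp e' hb h2]; simp
    exact (hF'.1 e e' hne ⟨a, ha, b, hb, hab.imp id fun h => ⟨h, hau, hbu⟩⟩).mono
      (hsub e h1) (hsub e' h2)
  · intro e
    by_cases he : e ∈ ZZ K v
    · simp [he, hFZ]
    rw [if_neg he]
    by_cases h1 : e = s(u, x)
    · subst h1; rw [hFux, wt_adj hux]; simp
    have hFe : F e = if e = s(x, x) then (F' e).erase γ else F' e := by
      simp only [hFdef]
      rw [if_neg he, if_neg h1]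
    have hc := hF'.2 e
    simp only [Finset.notMem_empty, if_false] at hc
    rw [hFe]
    induction e using Sym2.ind with
    | _ a b =>
    by_cases hab : a = b
    · subst hab
      rw [wt_loop] at hc
      rw [wt_loop]
      by_cases hax : a = x
      · subst hax
        rw [if_pos rfl, Finset.card_erase_of_mem hγ1, hc]
        have := delV_deg_adj hux
        omega
      · rw [if_neg (by simpa using hax), hc, delV_deg_non]
        · rintro rfl; exact he (ZZ_loop hu)
        · intro h
          rw [(hX a h).resolve_right hax] at he; exact he (ZZ_self _ _)
    · rw [if_neg]
      swap
      · intro h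
        rcases Sym2.eq_iff.1 h with h | h <;> exact hab (h.1.trans h.2.symm)
      rw [hc]
      by_cases hadj : K.Adj a b
      · have ha : a ≠ u := by
          rintro rfl
          rcases hX b hadj with rfl | rfl
          · rw [Sym2.eq_swap] at he; exact he (ZZ_edge hu)
          · exact h1 rfl
        have hb : b ≠ u := by
          rintro rfl
          rcases hX a hadj.symm with rfl | rfl
          · exact he (ZZ_edge hu)
          · exact h1 Sym2.eq_swap
        rw [wt_adj hadj, wt_adj]
        exact ⟨hadj, ha, hb⟩
      · rw [wt_non hab hadj, wt_non hab]
        exact fun h => hadj h.1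

theorem TwoDegenerate.mono {K K' : SimpleGraph V} (h : TwoDegenerate K) (hle : K' ≤ K) :
    TwoDegenerate K' := by
  intro A hA
  obtain ⟨v, hv, hc⟩ := h A hA
  refine ⟨v, hv, (Set.ncard_le_ncard ?_ (Set.toFinite _)).trans hc⟩
  exact Set.inter_subset_inter_left _ (fun x hx => hle hx)

theorem pick {K : SimpleGraph V} (h : TwoDegenerate K) {a b : V} (hab : K.Adj a b) :
    ∃ v u, u ∈ Sm K v ∧ (Bg K v).card ≤ 2 := by
  by_cases hA : (Finset.univ.filter (fun v => ¬ K.degree v ≤ 2)).Nonempty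
  · obtain ⟨v, hv, hc⟩ := h _ hA
    have : (Bg K v).card ≤ 2 := by
      rw [← Set.ncard_coe_finset]
      convert hc using 2
      ext x
      simp [Bg]
    have h1 := sm_add_bg K v
    simp only [Finset.mem_filter, Finset.mem_univ, true_and] at hv
    obtain ⟨u, hu⟩ := Finset.card_pos.1 (show 0 < (Sm K v).card by omega)
    exact ⟨v, u, hu, this⟩
  · rw [Finset.not_nonempty_iff_eq_empty, Finset.filter_eq_empty_iff] at hA
    have hA' : ∀ x, K.degree x ≤ 2 := fun x => not_not.1 (hA (Finset.mem_univ x))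
    refine ⟨a, b, mem_Sm.2 ⟨hab, hA' b⟩, ?_⟩
    rw [Finset.card_eq_zero.2]
    · simp
    · ext x; simp only [mem_Bg, Finset.notMem_empty, iff_false]; exact fun h => h.2 (hA' x)

theorem coreColor {D : ℕ} (h2D : 2 ≤ D) (K : SimpleGraph V) (h2 : TwoDegenerate K)
    (hD : ∀ v, K.degree v ≤ D) :
    ∃ F : Sym2 V → Finset (Fin (5 * D + 1)), Part K D F ∅ := by
  induction K using WellFoundedLT.induction with
  | ind K ih =>
  by_cases hE : ∃ a b, K.Adj a b
  · obtain ⟨a, b, hab⟩ := hE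
    obtain ⟨v, u, hu, hr⟩ := pick h2 hab
    obtain ⟨hvu, hdu⟩ := mem_Sm.1 hu
    have hle : delV K u ≤ K := fun a b h => h.1
    have hlt : delV K u < K := by
      refine lt_of_le_of_ne hle ?_
      intro h
      rw [← h] at hvu
      exact hvu.2.2 rfl
    obtain ⟨F', hF'⟩ := ih _ hlt (h2.mono hle) (fun w => by
      by_cases hwu : w = u
      · subst hwu
        have : (delV K w).neighborFinset w = ∅ := by
          ext c; simp [delV_adj]
        rw [← SimpleGraph.card_neighborFinset_eq_degree, this]; simp
      · rw [← SimpleGraph.card_neighborFinset_eq_degree, delV_nbr K hwu]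
        refine (Finset.card_le_card (Finset.erase_subset _ _)).trans ?_
        rw [SimpleGraph.card_neighborFinset_eq_degree]; exact hD w)
    have h1 : ∃ F : Sym2 V → Finset (Fin (5 * D + 1)), Part K D F (ZZ K v) := by
      by_cases hX : ∀ x, K.Adj u x → x = v
      · exact stage1A hu hX F' hF'
      · push Not at hX
        obtain ⟨x, hux, hxv⟩ := hX
        refine stage1B hD hr hu hux hxv ?_ F' hF'
        intro y hy
        by_contra hcon
        push Not at hcon
        have hc := card_erase_nbr hvu
        have : 1 < ((K.neighborFinset u).erase v).card :=
          Finset.one_lt_card.2 ⟨x, by simp [hxv, hux], y, by simp [hcon.1, hy], hcon.2.symm⟩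
        omega
    obtain ⟨F1, hF1⟩ := h1
    obtain ⟨F2, hF2⟩ := stage2 hD hr _ subset_rfl F1 hF1
    obtain ⟨F3, hF3⟩ := stage3 h2D hD hr F2 hF2
    exact stage4 h2D hD _ subset_rfl F3 hF3
  · push Not at hE
    obtain ⟨s, hs⟩ := Finset.exists_subset_card_eq
      (show D + 2 ≤ (Finset.univ : Finset (Fin (5 * D + 1))).card by simp; omega)
    refine ⟨fun e => if e.IsDiag then s else ∅, ?_, ?_⟩
    · rintro e e' hne ⟨a, ha, b, hb, hab⟩
      have hab := hab.resolve_right (hE a b)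
      subst hab
      obtain ⟨c, rfl⟩ := Sym2.mem_iff_exists.1 ha
      obtain ⟨d, rfl⟩ := Sym2.mem_iff_exists.1 hb
      by_cases h1 : a = c
      · by_cases h2 : a = d
        · subst h1; subst h2; exact absurd rfl hne
        · simp [h2]
      · simp [h1]
    · intro e
      simp only [Finset.notMem_empty, if_false]
      induction e using Sym2.ind with
      | _ a b =>
      by_cases hab : a = b
      · subst hab
        rw [wt_loop]
        have : K.neighborFinset a = ∅ := by ext c; simp [hE]
        have h0 : K.degree a = 0 := by
          rw [← SimpleGraph.card_neighborFinset_eq_degree, this]; simp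
        simp [hs.2, h0]
      · rw [wt_non hab (hE a b)]; simp [hab]

/-- the core: both ends are not leaves -/
def core (G : SimpleGraph V) : SimpleGraph V where
  Adj a b := G.Adj a b ∧ G.degree a ≠ 1 ∧ G.degree b ≠ 1
  symm := ⟨fun _ _ h => ⟨h.1.symm, h.2.2, h.2.1⟩⟩
  loopless := ⟨fun _ h => h.1.ne rfl⟩

theorem core_adj {G : SimpleGraph V} {a b : V} :
    (core G).Adj a b ↔ G.Adj a b ∧ G.degree a ≠ 1 ∧ G.degree b ≠ 1 := Iff.rfl

theorem core_deg {G : SimpleGraph V} {D : ℕ} (hA1 : G.maxDegree ≤ D + 2)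
    (hA2 : ∀ t ∈ Finset.Icc 1 2, ∀ v : V, G.degree v = D + t →
      t ≤ ((G.neighborFinset v).filter (fun u => G.degree u = 1)).card) (v : V) :
    (core G).degree v ≤ D := by
  have h1 : (core G).neighborFinset v ⊆
      (G.neighborFinset v).filter (fun u => ¬ G.degree u = 1) := by
    intro x hx
    simp only [SimpleGraph.mem_neighborFinset, core_adj] at hx
    simp [hx.1, hx.2.2]
  have h2 := Finset.card_le_card h1
  have h3 := Finset.card_filter_add_card_filter_not (s := G.neighborFinset v)
    (fun u => G.degree u = 1)
  rw [SimpleGraph.card_neighborFinset_eq_degree] at h2 h3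
  have h4 := (G.degree_le_maxDegree v).trans hA1
  by_cases c1 : G.degree v = D + 1
  · have := hA2 1 (by simp) v c1
    omega
  by_cases c2 : G.degree v = D + 2
  · have := hA2 2 (by simp) v c2
    omega
  omega

theorem leaf_unique {G : SimpleGraph V} {a b c : V} (h : G.degree a = 1) (hb : G.Adj a b)
    (hc : G.Adj a c) : b = c := by
  rw [← SimpleGraph.card_neighborFinset_eq_degree, Finset.card_eq_one] at h
  obtain ⟨x, hx⟩ := h
  have h1 : b ∈ G.neighborFinset a := by simpa using hb
  have h2 : c ∈ G.neighborFinset a := by simpa using hc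
  rw [hx, Finset.mem_singleton] at h1 h2
  rw [h1, h2]

theorem finish {G : SimpleGraph V} {D : ℕ} (hA1 : G.maxDegree ≤ D + 2)
    (F : Sym2 V → Finset (Fin (5 * D + 1))) (hF : Part (core G) D F ∅) :
    HasStrongColoring G (5 * D + 1) := by
  have hcard : ∀ e, (F e).card = wt (core G) D e := by
    intro e; simpa using hF.2 e
  have hvv : ∀ e : Sym2 V, ∃ v, e ∈ G.edgeSet → e ∉ (core G).edgeSet →
      ∃ l, e = s(v, l) ∧ G.degree l = 1 := by
    intro e
    induction e using Sym2.ind with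
    | _ a b =>
    by_cases hb : G.degree b = 1
    · exact ⟨a, fun _ _ => ⟨b, rfl, hb⟩⟩
    · refine ⟨b, fun h1 h2 => ⟨a, Sym2.eq_swap, ?_⟩⟩
      by_contra ha
      exact h2 ⟨h1, ha, hb⟩
  choose vv hvv using hvv
  have hg : ∀ v, ∃ g : Sym2 V → Fin (5 * D + 1), ∀ e ∈ G.edgeSet, e ∉ (core G).edgeSet →
      vv e = v → g e ∈ F s(v, v) ∧ ∀ e' ∈ G.edgeSet, e' ∉ (core G).edgeSet →
      vv e' = v → g e = g e' → e = e' := by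
    intro v
    set E := Finset.univ.filter
      (fun e : Sym2 V => e ∈ G.edgeSet ∧ e ∉ (core G).edgeSet ∧ vv e = v) with hE
    have hEsub : E ⊆ (G.neighborFinset v \ (core G).neighborFinset v).image (fun l => s(v, l)) := by
      intro e he
      simp only [hE, Finset.mem_filter, Finset.mem_univ, true_and] at he
      obtain ⟨h1, h2, h3⟩ := he
      obtain ⟨l, hl, _⟩ := hvv e h1 h2
      rw [h3] at hl
      subst hl
      refine Finset.mem_image.2 ⟨l, ?_, rfl⟩
      simp only [Finset.mem_sdiff, SimpleGraph.mem_neighborFinset]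
      exact ⟨h1, h2⟩
    have hEc : E.card ≤ (F s(v, v)).card := by
      rw [hcard, wt_loop]
      refine (Finset.card_le_card hEsub).trans (Finset.card_image_le.trans ?_)
      rw [Finset.card_sdiff_of_subset, SimpleGraph.card_neighborFinset_eq_degree,
        SimpleGraph.card_neighborFinset_eq_degree]
      · have h4 := (G.degree_le_maxDegree v).trans hA1
        omega
      · intro x hx
        simp only [SimpleGraph.mem_neighborFinset, core_adj] at hx ⊢
        exact hx.1
    obtain ⟨f⟩ := Function.Embedding.nonempty_of_card_le
      (α := E) (β := F s(v, v)) (by simpa using hEc)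
    refine ⟨fun e => if h : e ∈ E then (f ⟨e, h⟩ : Fin (5 * D + 1)) else 0, ?_⟩
    intro e h1 h2 h3
    have he : e ∈ E := by simp [hE, h1, h2, h3]
    simp only [he, dif_pos]
    refine ⟨(f ⟨e, he⟩).2, ?_⟩
    intro e' h1' h2' h3' heq
    have he' : e' ∈ E := by simp [hE, h1', h2', h3']
    simp only [he', dif_pos] at heq
    have := f.injective (Subtype.ext heq)
    simpa using this
  choose g hg using hg
  have hpk : ∀ e : Sym2 V, ∃ c, e ∈ (core G).edgeSet → c ∈ F e := by
    intro e
    by_cases he : e ∈ (core G).edgeSet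
    · have : (F e).card = 1 := by
        rw [hcard]; simp [wt, he]
      obtain ⟨c, hc⟩ := Finset.card_pos.1 (show 0 < (F e).card by omega)
      exact ⟨c, fun _ => hc⟩
    · exact ⟨0, fun h => absurd h he⟩
  choose pk hpk using hpk
  set slot : Sym2 V → Sym2 V := fun e =>
    if e ∈ (core G).edgeSet then e else s(vv e, vv e) with hslot
  set C : Sym2 V → Fin (5 * D + 1) := fun e =>
    if e ∈ (core G).edgeSet then pk e else g (vv e) e with hC
  have hCs : ∀ e ∈ G.edgeSet, C e ∈ F (slot e) := by
    intro e he
    by_cases h : e ∈ (core G).edgeSet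
    · simp only [hC, hslot, if_pos h]; exact hpk e h
    · simp only [hC, hslot, if_neg h]; exact (hg _ e he h rfl).1
  have hin : ∀ e ∈ G.edgeSet, ∀ a ∈ e, G.degree a ≠ 1 → a ∈ slot e := by
    intro e he a ha hd
    by_cases h : e ∈ (core G).edgeSet
    · simp only [hslot, if_pos h]; exact ha
    · simp only [hslot, if_neg h]
      obtain ⟨l, hl, hl1⟩ := hvv e he h
      rw [hl] at ha
      rcases Sym2.mem_iff.1 ha with h1 | h1
      · simp [← h1]
      · exact absurd (h1 ▸ hl1) hd
  have L1 : ∀ e ∈ G.edgeSet, ∀ e' ∈ G.edgeSet, e ≠ e' → ∀ a, a ∈ e → a ∈ e' →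
      Near (core G) (slot e) (slot e') := by
    intro e he e' he' hne a ha ha'
    have hd : G.degree a ≠ 1 := by
      intro hd
      obtain ⟨b, rfl⟩ := Sym2.mem_iff_exists.1 ha
      obtain ⟨c, rfl⟩ := Sym2.mem_iff_exists.1 ha'
      have hbc : b = c := leaf_unique hd he he'
      exact hne (by rw [hbc])
    exact ⟨a, hin e he a ha hd, a, hin e' he' a ha' hd, Or.inl rfl⟩
  have L2 : ∀ e ∈ G.edgeSet, ∀ e' ∈ G.edgeSet, e ≠ e' → ∀ a b, a ∈ e → b ∈ e' → G.Adj a b →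
      Near (core G) (slot e) (slot e') := by
    intro e he e' he' hne a b ha hb hab
    by_cases hda : G.degree a = 1
    · obtain ⟨c, rfl⟩ := Sym2.mem_iff_exists.1 ha
      have : c = b := leaf_unique hda he hab
      subst this
      exact L1 _ he _ he' hne c (by simp) hb
    by_cases hdb : G.degree b = 1
    · obtain ⟨c, rfl⟩ := Sym2.mem_iff_exists.1 hb
      have : c = a := leaf_unique hdb he' hab.symm
      subst this
      exact L1 _ he _ he' hne c ha (by simp)
    exact ⟨a, hin e he a ha hda, b, hin e' he' b hb hdb, Or.inr ⟨hab, hda, hdb⟩⟩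
  refine ⟨C, ?_⟩
  rintro e he e' he' ⟨hne, hcf⟩ heq
  have hnear : Near (core G) (slot e) (slot e') := by
    rcases hcf with ⟨a, ha, ha'⟩ | ⟨f, hf, ⟨a, ha, haf⟩, ⟨b, hb, hbf⟩⟩
    · exact L1 e he e' he' hne a ha ha'
    · by_cases hab : a = b
      · subst hab; exact L1 e he e' he' hne a ha hb
      · have := (Sym2.mem_and_mem_iff hab).1 ⟨haf, hbf⟩
        subst this
        exact L2 e he e' he' hne a b ha hb hf
  by_cases hs : slot e = slot e'
  · by_cases h1 : e ∈ (core G).edgeSet <;> by_cases h2 : e' ∈ (core G).edgeSet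
    · simp only [hslot, if_pos h1, if_pos h2] at hs
      exact hne hs
    · simp only [hslot, if_pos h1, if_neg h2] at hs
      rw [hs] at h1
      exact (core G).irrefl h1
    · simp only [hslot, if_neg h1, if_pos h2] at hs
      rw [← hs] at h2
      exact (core G).irrefl h2
    · simp only [hslot, if_neg h1, if_neg h2] at hs
      have hvv' : vv e' = vv e := by simpa using hs.symm
      simp only [hC, if_neg h1, if_neg h2] at heq
      rw [hvv'] at heq
      exact hne ((hg _ e he h1 rfl).2 e' he' h2 hvv' heq)
  · have := hF.1 _ _ hs hnear
    have h1 := hCs e he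
    have h2 := hCs e' he'
    rw [← heq] at h2
    exact Finset.disjoint_left.1 this h1 h2

end Aux

/-- If `D ≥ 2` and the 2-degenerate graph `G` satisfies (A1) `Δ(G) ≤ D + 2` and
(A2) for `t ∈ {1, 2}` every vertex of degree `D + t` is adjacent to at least `t` vertices
of degree 1, then `χ'_s(G) ≤ 5D + 1`. -/
theorem strong_chromatic_index_two_degenerate_aux {V : Type*} [Fintype V] (D : ℕ)
    (hD : 2 ≤ D) (G : SimpleGraph V) (h2 : TwoDegenerate G)
    (hA1 : G.maxDegree ≤ D + 2)
    (hA2 : ∀ t ∈ Finset.Icc 1 2, ∀ v : V, G.degree v = D + t →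
      t ≤ ((G.neighborFinset v).filter (fun u => G.degree u = 1)).card) :
    strongChromaticIndex G ≤ 5 * D + 1 := by
  obtain ⟨F, hF⟩ := coreColor hD (core G) (h2.mono (fun _ _ h => h.1)) (core_deg hA1 hA2)
  exact Nat.sInf_le (finish hA1 F hF)

end StrongEC
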